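/- For φ ∈ BMO(ℝ^n) and its Poisson extension φ(x,t) = (P_t * φ)(x), there is a constant C(n) such that ∫_{ℝ^n} |φ(y) - φ(x,t)| P_t(x-y) dy ≤ C(n)‖φ‖_* for all x ∈ ℝ^n and t > 0. -/

import Mathlib

open MeasureTheory Real Set Filter

/-- Open axis-parallel cube with corner `c` and side length `l`. -/
def cube {n : ℕ} (c : EuclideanSpace ℝ (Fin n)) (l : ℝ) : Set (EuclideanSpace ℝ (Fin n)) :=
  {x | ∀ i, x i ∈ Set.Ioo (c i) (c i + l)}

/-- Mean of `f` over the cube with corner `c` and side length `l`. -/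
noncomputable def cubeAvg {n : ℕ} (f : EuclideanSpace ℝ (Fin n) → ℝ)
    (c : EuclideanSpace ℝ (Fin n)) (l : ℝ) : ℝ :=
  (∫ x in cube c l, f x) / l ^ n

/-- Mean oscillation of `f` over the cube with corner `c` and side length `l`. -/
noncomputable def cubeOsc {n : ℕ} (f : EuclideanSpace ℝ (Fin n) → ℝ)
    (c : EuclideanSpace ℝ (Fin n)) (l : ℝ) : ℝ :=
  (∫ x in cube c l, |f x - cubeAvg f c l|) / l ^ n

/-- `f ∈ BMO(ℝⁿ)`. -/
def IsBMO {n : ℕ} (f : EuclideanSpace ℝ (Fin n) → ℝ) : Prop :=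
  LocallyIntegrable f ∧ ∃ C, ∀ c l, 0 < l → cubeOsc f c l ≤ C

/-- `f ∈ VMO(ℝⁿ)`. -/
def IsVMO {n : ℕ} (f : EuclideanSpace ℝ (Fin n) → ℝ) : Prop :=
  IsBMO f ∧ ∀ ε > (0 : ℝ), ∃ δ > (0 : ℝ), ∀ c l, 0 < l → l ≤ δ → cubeOsc f c l ≤ ε

/-- The `BMO` seminorm `‖f‖_*`. -/
noncomputable def bmoNorm {n : ℕ} (f : EuclideanSpace ℝ (Fin n) → ℝ) : ℝ :=
  sInf {C : ℝ | 0 ≤ C ∧ ∀ c l, 0 < l → cubeOsc f c l ≤ C}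

/-- Poisson kernel of the upper half-space `ℝⁿ × (0,∞)`:
`P_t(x) = c_n t / (t² + |x|²)^((n+1)/2)` with `c_n = Γ((n+1)/2)/π^((n+1)/2)`. -/
noncomputable def poissonHK (n : ℕ) (t : ℝ) (x : EuclideanSpace ℝ (Fin n)) : ℝ :=
  (Real.Gamma (((n : ℝ) + 1) / 2) / Real.pi ^ (((n : ℝ) + 1) / 2)) * t /
    (t ^ 2 + ‖x‖ ^ 2) ^ (((n : ℝ) + 1) / 2)

/-- Poisson extension `φ(x, t) = (P_t * φ)(x)`. -/
noncomputable def poissonExt {n : ℕ} (φ : EuclideanSpace ℝ (Fin n) → ℝ)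
    (x : EuclideanSpace ℝ (Fin n)) (t : ℝ) : ℝ :=
  ∫ y, poissonHK n t (x - y) * φ y

open Module
open scoped ENNReal

/-!
Let `Q_k` be the cube with centre `x` and side `2^(k+1) t`. Averages of `φ` over consecutive `Q_k`
differ by at most `2^n ‖φ‖_*`, so the mean of `|φ - φ_{Q_0}|` over `Q_k` grows only linearly in `k`.
The kernel `y ↦ P_t(x - y)` is `O(2^(-k) / |Q_k|)` on `Q_k \ Q_{k-1}`, and summing over `k` bounds
`∫ |φ(y) - φ_{Q_0}| P_t(x - y) dy`. Since `P_t(x - y) dy` is a probability measure with respect to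
which `φ` has mean `φ(x,t)`, replacing `φ_{Q_0}` by `φ(x,t)` costs at most a factor `2`.
-/

section MeanOscillation

variable {α E : Type*} [MeasurableSpace α] {μ : Measure α} [NormedAddCommGroup E]
  [NormedSpace ℝ E] [CompleteSpace E] {f : α → E}

lemma measure_univ_mul_edist_average_le [IsFiniteMeasure μ] (hf : AEStronglyMeasurable f μ)
    (a : E) : μ univ * edist (⨍ x, f x ∂μ) a ≤ ∫⁻ x, edist (f x) a ∂μ := by
  simp only [edist_eq_enorm_sub]
  by_cases hfi : Integrable f μ
  · have havg : μ.real univ • (⨍ x, f x ∂μ - a) = ∫ x, (f x - a) ∂μ := by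
      rw [smul_sub, measure_smul_average, integral_sub hfi (integrable_const a), integral_const]
    calc μ univ * ‖⨍ x, f x ∂μ - a‖ₑ = ‖∫ x, (f x - a) ∂μ‖ₑ := by
          rw [← havg, enorm_smul, Real.enorm_of_nonneg measureReal_nonneg, ofReal_measureReal]
      _ ≤ ∫⁻ x, ‖f x - a‖ₑ ∂μ := enorm_integral_le_lintegral_enorm _
  · have hinfty : ∫⁻ x, ‖f x - a‖ₑ ∂μ = ∞ := by
      by_contra hfin
      refine hfi ?_
      have hsub : Integrable (fun x => f x - a) μ :=
        ⟨hf.sub aestronglyMeasurable_const, lt_top_iff_ne_top.2 hfin⟩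
      exact (hsub.add (integrable_const a)).congr (ae_of_all _ fun x => sub_add_cancel (f x) a)
    exact hinfty ▸ le_top

lemma lintegral_edist_integral_le [IsProbabilityMeasure μ] (hf : AEStronglyMeasurable f μ)
    (a : E) : ∫⁻ x, edist (f x) (∫ y, f y ∂μ) ∂μ ≤ 2 * ∫⁻ x, edist (f x) a ∂μ := by
  have hmean : edist a (∫ y, f y ∂μ) ≤ ∫⁻ x, edist (f x) a ∂μ := by
    simpa [average_eq_integral, edist_comm a] using measure_univ_mul_edist_average_le hf a
  calc ∫⁻ x, edist (f x) (∫ y, f y ∂μ) ∂μ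
      ≤ ∫⁻ x, (edist (f x) a + edist a (∫ y, f y ∂μ)) ∂μ :=
        lintegral_mono fun x => edist_triangle _ _ _
    _ = ∫⁻ x, edist (f x) a ∂μ + edist a (∫ y, f y ∂μ) := by
        rw [lintegral_add_right _ measurable_const, lintegral_const, measure_univ, mul_one]
    _ ≤ 2 * ∫⁻ x, edist (f x) a ∂μ := by rw [two_mul]; gcongr

lemma edist_setAverage_le_of_subset {s t : Set α} {A D : ℝ≥0∞}
    (hf : AEStronglyMeasurable f μ) (hst : s ⊆ t) (hs : μ s ≠ 0) (ht : μ t ≠ ∞)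
    (hD : μ t ≤ D * μ s) (hA : ∫⁻ x in t, edist (f x) (⨍ y in t, f y ∂μ) ∂μ ≤ A * μ t) :
    edist (⨍ x in s, f x ∂μ) (⨍ x in t, f x ∂μ) ≤ D * A := by
  have hs' : μ s ≠ ∞ := measure_ne_top_of_subset hst ht
  have : IsFiniteMeasure (μ.restrict s) := isFiniteMeasure_restrict.2 hs'
  refine (ENNReal.mul_le_mul_iff_right hs hs').1 ?_
  calc μ s * edist (⨍ x in s, f x ∂μ) (⨍ x in t, f x ∂μ)
      ≤ ∫⁻ x in s, edist (f x) (⨍ y in t, f y ∂μ) ∂μ := by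
        simpa only [Measure.restrict_apply_univ]
          using measure_univ_mul_edist_average_le hf.restrict (⨍ y in t, f y ∂μ)
    _ ≤ ∫⁻ x in t, edist (f x) (⨍ y in t, f y ∂μ) ∂μ := lintegral_mono_set hst
    _ ≤ A * (D * μ s) := hA.trans (by gcongr)
    _ = μ s * (D * A) := by ring

variable {Q : ℕ → Set α} {A D : ℝ≥0∞}

lemma edist_setAverage_zero_le (hf : AEStronglyMeasurable f μ) (hQ : Monotone Q)
    (hQ0 : ∀ k, μ (Q k) ≠ 0) (hQt : ∀ k, μ (Q k) ≠ ∞) (hD : ∀ k, μ (Q (k + 1)) ≤ D * μ (Q k))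
    (hA : ∀ k, ∫⁻ x in Q k, edist (f x) (⨍ y in Q k, f y ∂μ) ∂μ ≤ A * μ (Q k)) (k : ℕ) :
    edist (⨍ x in Q k, f x ∂μ) (⨍ x in Q 0, f x ∂μ) ≤ k * (D * A) := by
  induction k with
  | zero => simp
  | succ k ih =>
    calc edist (⨍ x in Q (k + 1), f x ∂μ) (⨍ x in Q 0, f x ∂μ)
        ≤ edist (⨍ x in Q (k + 1), f x ∂μ) (⨍ x in Q k, f x ∂μ)
          + edist (⨍ x in Q k, f x ∂μ) (⨍ x in Q 0, f x ∂μ) := edist_triangle _ _ _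
      _ ≤ D * A + k * (D * A) := by
          gcongr
          rw [edist_comm]
          exact edist_setAverage_le_of_subset hf (hQ k.le_succ) (hQ0 k) (hQt _) (hD k) (hA _)
      _ = (k + 1 : ℕ) * (D * A) := by push_cast; ring

lemma setLIntegral_edist_setAverage_zero_le (hf : AEStronglyMeasurable f μ) (hQ : Monotone Q)
    (hQ0 : ∀ k, μ (Q k) ≠ 0) (hQt : ∀ k, μ (Q k) ≠ ∞) (hD : ∀ k, μ (Q (k + 1)) ≤ D * μ (Q k))
    (hA : ∀ k, ∫⁻ x in Q k, edist (f x) (⨍ y in Q k, f y ∂μ) ∂μ ≤ A * μ (Q k)) (k : ℕ) :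
    ∫⁻ x in Q k, edist (f x) (⨍ y in Q 0, f y ∂μ) ∂μ ≤ (1 + k * D) * A * μ (Q k) := by
  calc ∫⁻ x in Q k, edist (f x) (⨍ y in Q 0, f y ∂μ) ∂μ
      ≤ ∫⁻ x in Q k, (edist (f x) (⨍ y in Q k, f y ∂μ)
          + edist (⨍ y in Q k, f y ∂μ) (⨍ y in Q 0, f y ∂μ)) ∂μ :=
        lintegral_mono fun x => edist_triangle _ _ _
    _ = ∫⁻ x in Q k, edist (f x) (⨍ y in Q k, f y ∂μ) ∂μ
          + edist (⨍ y in Q k, f y ∂μ) (⨍ y in Q 0, f y ∂μ) * μ (Q k) := by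
        rw [lintegral_add_right _ measurable_const, setLIntegral_const]
    _ ≤ A * μ (Q k) + k * (D * A) * μ (Q k) := by
        gcongr
        · exact hA k
        · exact edist_setAverage_zero_le hf hQ hQ0 hQt hD hA k
    _ = (1 + k * D) * A * μ (Q k) := by ring

lemma lintegral_mul_le_tsum_setLIntegral {g w : α → ℝ≥0∞} {b : ℕ → ℝ≥0∞}
    (hQm : ∀ k, MeasurableSet (Q k)) (hQ : ⋃ k, Q k = univ) (hb : ∀ k, b k ≠ ∞)
    (hw : ∀ k, ∀ x ∈ disjointed Q k, w x ≤ b k) :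
    ∫⁻ x, w x * g x ∂μ ≤ ∑' k, b k * ∫⁻ x in Q k, g x ∂μ := by
  calc ∫⁻ x, w x * g x ∂μ = ∫⁻ x in ⋃ k, disjointed Q k, w x * g x ∂μ := by
        rw [iUnion_disjointed, hQ, setLIntegral_univ]
    _ ≤ ∑' k, ∫⁻ x in disjointed Q k, w x * g x ∂μ := lintegral_iUnion_le _ _
    _ ≤ ∑' k, b k * ∫⁻ x in Q k, g x ∂μ := by
        gcongr with k
        calc ∫⁻ x in disjointed Q k, w x * g x ∂μ
            ≤ ∫⁻ x in disjointed Q k, b k * g x ∂μ :=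
              setLIntegral_mono' (.disjointed hQm k) fun x hx => by gcongr; exact hw k x hx
          _ = b k * ∫⁻ x in disjointed Q k, g x ∂μ := lintegral_const_mul' _ _ (hb k)
          _ ≤ b k * ∫⁻ x in Q k, g x ∂μ := by gcongr; exact disjointed_subset Q k

end MeanOscillation

section Cubes

variable {n : ℕ}

lemma cube_eq_preimage (c : EuclideanSpace ℝ (Fin n)) (l : ℝ) :
    cube c l = WithLp.ofLp ⁻¹' (univ.pi fun i => Ioo (c i) (c i + l)) := by
  ext y
  simp [cube]

lemma measurableSet_cube (c : EuclideanSpace ℝ (Fin n)) (l : ℝ) : MeasurableSet (cube c l) := by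
  rw [cube_eq_preimage]
  exact (PiLp.volume_preserving_ofLp (Fin n)).measurable
    (MeasurableSet.univ_pi fun _ => measurableSet_Ioo)

lemma volume_cube (c : EuclideanSpace ℝ (Fin n)) {l : ℝ} (hl : 0 ≤ l) :
    volume (cube c l) = ENNReal.ofReal (l ^ n) := by
  rw [cube_eq_preimage, (PiLp.volume_preserving_ofLp (Fin n)).measure_preimage
    (MeasurableSet.univ_pi fun _ => measurableSet_Ioo).nullMeasurableSet, Real.volume_pi_Ioo]
  simp [ENNReal.ofReal_pow hl]

lemma isBounded_cube (c : EuclideanSpace ℝ (Fin n)) (l : ℝ) : Bornology.IsBounded (cube c l) := by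
  rw [cube_eq_preimage]
  exact (PiLp.antilipschitzWith_ofLp 2 _).isBounded_preimage
    (.pi fun _ => Metric.isBounded_Ioo _ _)

lemma cubeAvg_eq_setAverage (f : EuclideanSpace ℝ (Fin n) → ℝ) (c : EuclideanSpace ℝ (Fin n))
    {l : ℝ} (hl : 0 ≤ l) : cubeAvg f c l = ⨍ x in cube c l, f x := by
  rw [cubeAvg, setAverage_eq, measureReal_def, volume_cube c hl,
    ENNReal.toReal_ofReal (by positivity), smul_eq_mul, div_eq_inv_mul]

lemma setLIntegral_edist_setAverage_cube_le {f : EuclideanSpace ℝ (Fin n) → ℝ}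
    (hf : LocallyIntegrable f) {c : EuclideanSpace ℝ (Fin n)} {l A : ℝ} (hl : 0 < l)
    (hA : cubeOsc f c l ≤ A) :
    ∫⁻ x in cube c l, edist (f x) (⨍ y in cube c l, f y)
      ≤ ENNReal.ofReal A * volume (cube c l) := by
  have hfc : IntegrableOn f (cube c l) :=
    (hf.integrableOn_isCompact (isBounded_cube c l).isCompact_closure).mono_set subset_closure
  have hvol : volume (cube c l) ≠ ∞ := volume_cube c hl.le ▸ ENNReal.ofReal_ne_top
  have hosc : ∫ x in cube c l, |f x - ⨍ y in cube c l, f y| ≤ A * l ^ n := by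
    rwa [cubeOsc, cubeAvg_eq_setAverage f c hl.le, div_le_iff₀ (by positivity)] at hA
  calc ∫⁻ x in cube c l, edist (f x) (⨍ y in cube c l, f y)
      = ENNReal.ofReal (∫ x in cube c l, |f x - ⨍ y in cube c l, f y|) := by
        simp only [edist_eq_enorm_sub, ← Real.norm_eq_abs]
        exact (ofReal_integral_norm_eq_lintegral_enorm (hfc.sub (integrableOn_const hvol))).symm
    _ ≤ ENNReal.ofReal (A * l ^ n) := ENNReal.ofReal_le_ofReal hosc
    _ = ENNReal.ofReal A * volume (cube c l) := by
        rw [volume_cube c hl.le, ENNReal.ofReal_mul' (by positivity)]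

/-- The open axis-parallel cube with centre `x` and half side length `r`, that is, the ball of the
sup norm, written as a `cube` through its corner. -/
def centeredCube (x : EuclideanSpace ℝ (Fin n)) (r : ℝ) : Set (EuclideanSpace ℝ (Fin n)) :=
  cube (WithLp.toLp 2 fun i => x i - r) (2 * r)

lemma mem_centeredCube {x y : EuclideanSpace ℝ (Fin n)} {r : ℝ} :
    y ∈ centeredCube x r ↔ ∀ i, |y i - x i| < r := by
  simp only [centeredCube, cube, mem_ofPred_eq, mem_Ioo, abs_lt]
  refine forall_congr' fun i => and_congr ?_ ?_ <;> constructor <;> intro h <;> linarith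

lemma volume_centeredCube (x : EuclideanSpace ℝ (Fin n)) {r : ℝ} (hr : 0 ≤ r) :
    volume (centeredCube x r) = ENNReal.ofReal ((2 * r) ^ n) :=
  volume_cube _ (by positivity)

lemma monotone_centeredCube (x : EuclideanSpace ℝ (Fin n)) : Monotone (centeredCube x) :=
  fun _ _ hrs _ hy => mem_centeredCube.2 fun i => (mem_centeredCube.1 hy i).trans_le hrs

lemma mem_centeredCube_of_norm_sub_lt {x y : EuclideanSpace ℝ (Fin n)} {r : ℝ}
    (h : ‖x - y‖ < r) : y ∈ centeredCube x r :=
  mem_centeredCube.2 fun i => (PiLp.norm_apply_le (y - x) i).trans_lt (norm_sub_rev x y ▸ h)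

lemma volume_centeredCube_two_mul (x : EuclideanSpace ℝ (Fin n)) {r : ℝ} (hr : 0 ≤ r) :
    volume (centeredCube x (2 * r)) = 2 ^ n * volume (centeredCube x r) := by
  rw [volume_centeredCube x hr, volume_centeredCube x (by positivity), mul_pow 2 (2 * r),
    ENNReal.ofReal_mul (by positivity), ENNReal.ofReal_pow zero_le_two, ENNReal.ofReal_ofNat]

lemma monotone_centeredCube_two_pow_mul (x : EuclideanSpace ℝ (Fin n)) {t : ℝ} (ht : 0 ≤ t) :
    Monotone fun k : ℕ => centeredCube x (2 ^ k * t) :=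
  (monotone_centeredCube x).comp ((pow_right_mono₀ one_le_two).mul_const ht)

lemma iUnion_centeredCube_two_pow_mul (x : EuclideanSpace ℝ (Fin n)) {t : ℝ} (ht : 0 < t) :
    ⋃ k : ℕ, centeredCube x (2 ^ k * t) = univ := by
  refine iUnion_eq_univ_iff.2 fun y => ?_
  obtain ⟨k, hk⟩ := pow_unbounded_of_one_lt (‖x - y‖ / t) one_lt_two
  exact ⟨k, mem_centeredCube_of_norm_sub_lt ((div_lt_iff₀ ht).1 hk)⟩

-- Halving the radius lets one bound cover both the innermost cube, where `‖x - y‖` may vanish, and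
-- the annuli `2^(k-1) t ≤ |y - x|_∞ < 2^k t`.
lemma half_two_pow_mul_sq_le_of_mem_disjointed {x y : EuclideanSpace ℝ (Fin n)} {t : ℝ}
    (ht : 0 ≤ t) {k : ℕ} (hy : y ∈ disjointed (fun k : ℕ => centeredCube x (2 ^ k * t)) k) :
    (2 ^ k * t / 2) ^ 2 ≤ t ^ 2 + ‖x - y‖ ^ 2 := by
  rcases k with _ | k
  · nlinarith [sq_nonneg t, sq_nonneg ‖x - y‖]
  · rw [← Order.succ_eq_add_one,
      (monotone_centeredCube_two_pow_mul x ht).disjointed_succ (not_isMax k)] at hy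
    have hfar : 2 ^ k * t ≤ ‖x - y‖ :=
      not_lt.1 fun hlt => hy.2 (mem_centeredCube_of_norm_sub_lt hlt)
    calc (2 ^ (k + 1) * t / 2) ^ 2 = (2 ^ k * t) ^ 2 := by ring
      _ ≤ ‖x - y‖ ^ 2 := by gcongr
      _ ≤ t ^ 2 + ‖x - y‖ ^ 2 := le_add_of_nonneg_left (sq_nonneg t)

end Cubes

section GaussianSubordination

lemma lintegral_ofReal_eq_ofReal_of_integral_eq {α : Type*} [MeasurableSpace α] {μ : Measure α}
    {f : α → ℝ} {v : ℝ} (hf : 0 ≤ᵐ[μ] f) (hv : v ≠ 0) (h : ∫ x, f x ∂μ = v) :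
    ∫⁻ x, ENNReal.ofReal (f x) ∂μ = ENNReal.ofReal v := by
  rw [← h, ofReal_integral_eq_lintegral_ofReal (.of_integral_ne_zero (h ▸ hv)) hf]

lemma lintegral_rpow_mul_exp_neg_mul_Ioi {s b : ℝ} (hs : 0 < s) (hb : 0 < b) :
    ∫⁻ u in Ioi (0 : ℝ), ENNReal.ofReal (u ^ (s - 1) * rexp (-(b * u))) =
      ENNReal.ofReal (b ^ (-s) * Real.Gamma s) := by
  refine lintegral_ofReal_eq_ofReal_of_integral_eq ?_ (by positivity) ?_
  · filter_upwards [ae_restrict_mem measurableSet_Ioi] with u (hu : 0 < u)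
    change 0 ≤ u ^ (s - 1) * rexp (-(b * u))
    positivity
  · rw [Real.integral_rpow_mul_exp_neg_mul_Ioi hs hb, one_div, Real.inv_rpow hb.le,
      Real.rpow_neg hb.le]

variable {V : Type*} [NormedAddCommGroup V] [InnerProductSpace ℝ V] [FiniteDimensional ℝ V]
  [MeasurableSpace V] [BorelSpace V]

lemma lintegral_rexp_neg_mul_sq_norm {u : ℝ} (hu : 0 < u) :
    ∫⁻ v : V, ENNReal.ofReal (rexp (-u * ‖v‖ ^ 2)) =
      ENNReal.ofReal ((π / u) ^ ((finrank ℝ V : ℝ) / 2)) :=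
  lintegral_ofReal_eq_ofReal_of_integral_eq (ae_of_all _ fun _ => by positivity) (by positivity)
    (GaussianFourier.integral_rexp_neg_mul_sq_norm hu)

lemma lintegral_rpow_mul_exp_neg_mul_add_sq_norm {s b u : ℝ} (hu : 0 < u) :
    ∫⁻ v : V, ENNReal.ofReal (u ^ (s - 1) * rexp (-((b + ‖v‖ ^ 2) * u))) =
      ENNReal.ofReal (π ^ ((finrank ℝ V : ℝ) / 2)) *
        ENNReal.ofReal (u ^ (s - finrank ℝ V / 2 - 1) * rexp (-(b * u))) := by
  have hfactor (v : V) : ENNReal.ofReal (u ^ (s - 1) * rexp (-((b + ‖v‖ ^ 2) * u))) =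
      ENNReal.ofReal (u ^ (s - 1) * rexp (-(b * u))) * ENNReal.ofReal (rexp (-u * ‖v‖ ^ 2)) := by
    rw [← ENNReal.ofReal_mul (by positivity), mul_assoc, ← Real.exp_add]
    congr 3
    ring
  have hpow : u ^ (s - 1) = u ^ (s - finrank ℝ V / 2 - 1) * u ^ ((finrank ℝ V : ℝ) / 2) := by
    rw [← Real.rpow_add hu]
    congr 1
    ring
  simp_rw [hfactor]
  rw [lintegral_const_mul' _ _ ENNReal.ofReal_ne_top, lintegral_rexp_neg_mul_sq_norm hu,
    ← ENNReal.ofReal_mul (by positivity), ← ENNReal.ofReal_mul (by positivity),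
    Real.div_rpow pi_pos.le hu.le, hpow]
  congr 1
  field_simp

-- Write `Γ(s) (b + ‖v‖²)^(-s)` as `∫ u^(s-1) exp (-(b + ‖v‖²) u) du` and integrate in `v` first.
lemma lintegral_rpow_neg_add_sq_norm {s b : ℝ} (hs : (finrank ℝ V : ℝ) / 2 < s) (hb : 0 < b) :
    ∫⁻ v : V, ENNReal.ofReal ((b + ‖v‖ ^ 2) ^ (-s) * Real.Gamma s) =
      ENNReal.ofReal (π ^ ((finrank ℝ V : ℝ) / 2) *
        (b ^ (-(s - finrank ℝ V / 2)) * Real.Gamma (s - finrank ℝ V / 2))) := by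
  have hs0 : 0 < s := lt_of_le_of_lt (by positivity) hs
  have hmeas : Measurable fun p : V × ℝ =>
      ENNReal.ofReal (p.2 ^ (s - 1) * rexp (-((b + ‖p.1‖ ^ 2) * p.2))) := by fun_prop
  calc ∫⁻ v : V, ENNReal.ofReal ((b + ‖v‖ ^ 2) ^ (-s) * Real.Gamma s)
      = ∫⁻ v : V, ∫⁻ u in Ioi (0 : ℝ),
          ENNReal.ofReal (u ^ (s - 1) * rexp (-((b + ‖v‖ ^ 2) * u))) :=
        lintegral_congr fun v => (lintegral_rpow_mul_exp_neg_mul_Ioi hs0 (by positivity)).symm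
    _ = ∫⁻ u in Ioi (0 : ℝ), ∫⁻ v : V,
          ENNReal.ofReal (u ^ (s - 1) * rexp (-((b + ‖v‖ ^ 2) * u))) :=
        lintegral_lintegral_swap hmeas.aemeasurable
    _ = ∫⁻ u in Ioi (0 : ℝ), ENNReal.ofReal (π ^ ((finrank ℝ V : ℝ) / 2)) *
          ENNReal.ofReal (u ^ (s - finrank ℝ V / 2 - 1) * rexp (-(b * u))) :=
        setLIntegral_congr_fun measurableSet_Ioi
          fun u hu => lintegral_rpow_mul_exp_neg_mul_add_sq_norm hu
    _ = _ := by
        rw [lintegral_const_mul' _ _ ENNReal.ofReal_ne_top,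
          lintegral_rpow_mul_exp_neg_mul_Ioi (sub_pos.2 hs) hb,
          ← ENNReal.ofReal_mul (by positivity)]

end GaussianSubordination

section PoissonKernel

/-- The normalizing constant `c_n = Γ((n+1)/2) / π^((n+1)/2)` of the Poisson kernel. -/
noncomputable def poissonConst (n : ℕ) : ℝ :=
  Real.Gamma (((n : ℝ) + 1) / 2) / π ^ (((n : ℝ) + 1) / 2)

lemma poissonConst_pos (n : ℕ) : 0 < poissonConst n :=
  div_pos (Real.Gamma_pos_of_pos (by positivity)) (by positivity)

variable {n : ℕ} {t : ℝ}

lemma poissonHK_nonneg (ht : 0 ≤ t) (z : EuclideanSpace ℝ (Fin n)) : 0 ≤ poissonHK n t z := by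
  have hc : 0 ≤ poissonConst n := (poissonConst_pos n).le
  change 0 ≤ poissonConst n * t / _
  positivity

lemma measurable_poissonHK : Measurable (poissonHK n t) := by
  unfold poissonHK
  fun_prop

lemma poissonHK_le {r : ℝ} (ht : 0 ≤ t) (hr : 0 < r) {z : EuclideanSpace ℝ (Fin n)}
    (h : r ^ 2 ≤ t ^ 2 + ‖z‖ ^ 2) : poissonHK n t z ≤ poissonConst n * t / r ^ (n + 1) := by
  have hc : 0 ≤ poissonConst n := (poissonConst_pos n).le
  have hpow : r ^ (n + 1) = (r ^ 2) ^ (((n : ℝ) + 1) / 2) := by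
    rw [← Real.rpow_natCast r 2, ← Real.rpow_mul hr.le, ← Real.rpow_natCast]
    congr 1
    push_cast
    ring
  change poissonConst n * t / _ ≤ _
  rw [hpow]
  gcongr

lemma lintegral_poissonHK (ht : 0 < t) :
    ∫⁻ z, ENNReal.ofReal (poissonHK n t z) = 1 := by
  have hkernel (z : EuclideanSpace ℝ (Fin n)) : ENNReal.ofReal (poissonHK n t z) =
      ENNReal.ofReal (t / π ^ (((n : ℝ) + 1) / 2)) * ENNReal.ofReal
        ((t ^ 2 + ‖z‖ ^ 2) ^ (-(((n : ℝ) + 1) / 2)) * Real.Gamma (((n : ℝ) + 1) / 2)) := by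
    rw [← ENNReal.ofReal_mul (by positivity), Real.rpow_neg (by positivity), poissonHK]
    congr 1
    field_simp
  have hhalf : ((n : ℝ) + 1) / 2 - n / 2 = 1 / 2 := by ring
  have hpi : π ^ (((n : ℝ) + 1) / 2) = π ^ ((n : ℝ) / 2) * √π := by
    rw [Real.sqrt_eq_rpow, ← Real.rpow_add pi_pos, add_div]
  have ht' : (t ^ 2) ^ (-(1 / 2) : ℝ) = t⁻¹ := by
    rw [Real.rpow_neg (sq_nonneg t), ← Real.sqrt_eq_rpow, Real.sqrt_sq ht.le]
  simp_rw [hkernel]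
  rw [lintegral_const_mul' _ _ ENNReal.ofReal_ne_top,
    lintegral_rpow_neg_add_sq_norm (by simp [add_div]) (by positivity), finrank_euclideanSpace_fin,
    hhalf, Real.Gamma_one_half_eq, ht', hpi, ← ENNReal.ofReal_mul (by positivity),
    ← ENNReal.ofReal_one]
  congr 1
  field_simp

/-- The harmonic measure of the upper half-space `ℝⁿ × (0,∞)` seen from the point `(x, t)`: the
measure on `ℝⁿ` with density `y ↦ P_t(x - y)`. Integrating against it gives the Poisson extension
at `(x, t)`. -/
noncomputable def halfSpaceHarmonicMeasure (x : EuclideanSpace ℝ (Fin n)) (t : ℝ) :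
    Measure (EuclideanSpace ℝ (Fin n)) :=
  volume.withDensity fun y => ENNReal.ofReal (poissonHK n t (x - y))

lemma measurable_ofReal_poissonHK_sub (x : EuclideanSpace ℝ (Fin n)) (t : ℝ) :
    Measurable fun y => ENNReal.ofReal (poissonHK n t (x - y)) :=
  (measurable_poissonHK.comp (measurable_const.sub measurable_id)).ennreal_ofReal

lemma isProbabilityMeasure_halfSpaceHarmonicMeasure (x : EuclideanSpace ℝ (Fin n)) (ht : 0 < t) :
    IsProbabilityMeasure (halfSpaceHarmonicMeasure x t) := by
  refine ⟨?_⟩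
  rw [halfSpaceHarmonicMeasure, withDensity_apply _ .univ, setLIntegral_univ,
    lintegral_sub_left_eq_self (fun y => ENNReal.ofReal (poissonHK n t y)), lintegral_poissonHK ht]

lemma halfSpaceHarmonicMeasure_absolutelyContinuous (x : EuclideanSpace ℝ (Fin n)) (t : ℝ) :
    halfSpaceHarmonicMeasure x t ≪ volume :=
  withDensity_absolutelyContinuous _ _

lemma lintegral_halfSpaceHarmonicMeasure (x : EuclideanSpace ℝ (Fin n)) (t : ℝ)
    (g : EuclideanSpace ℝ (Fin n) → ℝ≥0∞) :
    ∫⁻ y, g y ∂halfSpaceHarmonicMeasure x t =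
      ∫⁻ y, ENNReal.ofReal (poissonHK n t (x - y)) * g y :=
  lintegral_withDensity_eq_lintegral_mul_non_measurable _ (measurable_ofReal_poissonHK_sub x t)
    (ae_of_all _ fun _ => ENNReal.ofReal_lt_top) g

lemma integral_halfSpaceHarmonicMeasure (φ : EuclideanSpace ℝ (Fin n) → ℝ)
    (x : EuclideanSpace ℝ (Fin n)) (ht : 0 ≤ t) :
    ∫ y, φ y ∂halfSpaceHarmonicMeasure x t = poissonExt φ x t := by
  rw [halfSpaceHarmonicMeasure, integral_withDensity_eq_integral_toReal_smul
    (measurable_ofReal_poissonHK_sub x t) (ae_of_all _ fun _ => ENNReal.ofReal_lt_top)]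
  simp only [ENNReal.toReal_ofReal (poissonHK_nonneg ht _), smul_eq_mul, poissonExt]

lemma lintegral_edist_integral_halfSpaceHarmonicMeasure (φ : EuclideanSpace ℝ (Fin n) → ℝ)
    (x : EuclideanSpace ℝ (Fin n)) (ht : 0 ≤ t) :
    ∫⁻ y, edist (φ y) (∫ z, φ z ∂halfSpaceHarmonicMeasure x t) ∂halfSpaceHarmonicMeasure x t =
      ∫⁻ y, ENNReal.ofReal (|φ y - poissonExt φ x t| * poissonHK n t (x - y)) := by
  rw [lintegral_halfSpaceHarmonicMeasure, integral_halfSpaceHarmonicMeasure φ x ht]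
  refine lintegral_congr fun y => ?_
  rw [edist_dist, Real.dist_eq, mul_comm, ENNReal.ofReal_mul (abs_nonneg _)]

end PoissonKernel

section PoissonOscillation

lemma hasSum_one_add_mul_mul_geometric_two (d : ℝ) :
    HasSum (fun k : ℕ => (1 + k * d) * (1 / 2 : ℝ) ^ k) (2 * (1 + d)) := by
  have hlin : HasSum (fun k : ℕ => (k : ℝ) * (1 / 2) ^ k) 2 := by
    have hval : (1 / 2 : ℝ) / (1 - 1 / 2) ^ 2 = 2 := by norm_num
    simpa only [hval] using
      hasSum_coe_mul_geometric_of_norm_lt_one (r := (1 / 2 : ℝ)) (by norm_num)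
  convert hasSum_geometric_two.add (hlin.mul_left d) using 1
  · ext k
    ring
  · ring

variable {n : ℕ} {E : Type*} [NormedAddCommGroup E] [NormedSpace ℝ E] [CompleteSpace E]

/-- A bound, depending only on the dimension, for the mean distance with respect to the harmonic
measure seen from `(x, t)` of a function of unit mean oscillation to its average over the cube with
centre `x` and side `2t`. It is `∑ k, c_n 2^(2n+1) 2^(-k) (1 + k 2^n)`. -/
noncomputable def poissonOscConst (n : ℕ) : ℝ :=
  poissonConst n * 2 ^ (2 * n + 1) * (2 * (1 + 2 ^ n))

lemma poissonOscConst_pos (n : ℕ) : 0 < poissonOscConst n := by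
  have := poissonConst_pos n
  unfold poissonOscConst
  positivity

lemma tsum_kernelBound_mul_volume_centeredCube (x : EuclideanSpace ℝ (Fin n)) {t : ℝ}
    (ht : 0 < t) (A : ℝ≥0∞) :
    ∑' k : ℕ, ENNReal.ofReal (poissonConst n * t / (2 ^ k * t / 2) ^ (n + 1)) *
      ((1 + k * 2 ^ n) * A * volume (centeredCube x (2 ^ k * t))) =
    ENNReal.ofReal (poissonOscConst n) * A := by
  have hc := poissonConst_pos n
  have hterm (k : ℕ) :
      ENNReal.ofReal (poissonConst n * t / (2 ^ k * t / 2) ^ (n + 1)) *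
        ((1 + k * 2 ^ n) * A * volume (centeredCube x (2 ^ k * t))) =
      ENNReal.ofReal (poissonConst n * 2 ^ (2 * n + 1) * ((1 + k * 2 ^ n) * (1 / 2) ^ k)) * A := by
    have hreal : poissonConst n * 2 ^ (2 * n + 1) * ((1 + k * 2 ^ n) * (1 / 2) ^ k) =
        poissonConst n * t / (2 ^ k * t / 2) ^ (n + 1) * (1 + k * 2 ^ n) *
          (2 * (2 ^ k * t)) ^ n := by
      rw [mul_pow 2 (2 ^ k * t), div_pow (2 ^ k * t), pow_succ (2 ^ k * t), one_div, inv_pow]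
      field_simp
      ring
    have hlin : ENNReal.ofReal (1 + k * 2 ^ n) = 1 + k * 2 ^ n := by
      rw [ENNReal.ofReal_add zero_le_one (by positivity), ENNReal.ofReal_mul (by positivity)]
      simp [ENNReal.ofReal_pow]
    rw [volume_centeredCube x (by positivity), hreal, ENNReal.ofReal_mul (by positivity),
      ENNReal.ofReal_mul (by positivity), hlin]
    ring
  have hsum := (hasSum_one_add_mul_mul_geometric_two (2 ^ n)).mul_left
    (poissonConst n * 2 ^ (2 * n + 1))
  simp_rw [hterm]
  rw [ENNReal.tsum_mul_right,
    ← ENNReal.ofReal_tsum_of_nonneg (fun k => by positivity) hsum.summable, hsum.tsum_eq,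
    poissonOscConst]

variable {f : EuclideanSpace ℝ (Fin n) → E} {A : ℝ≥0∞} {x : EuclideanSpace ℝ (Fin n)} {t : ℝ}

lemma lintegral_edist_setAverage_halfSpaceHarmonicMeasure_le (hf : AEStronglyMeasurable f)
    (ht : 0 < t)
    (hA : ∀ r > 0, ∫⁻ y in centeredCube x r, edist (f y) (⨍ z in centeredCube x r, f z) ≤
      A * volume (centeredCube x r)) :
    ∫⁻ y, edist (f y) (⨍ z in centeredCube x t, f z) ∂halfSpaceHarmonicMeasure x t ≤
      ENNReal.ofReal (poissonOscConst n) * A := by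
  have hr (k : ℕ) : 0 < 2 ^ k * t := by positivity
  have hvol (k : ℕ) :
      volume (centeredCube x (2 ^ k * t)) = ENNReal.ofReal ((2 * (2 ^ k * t)) ^ n) :=
    volume_centeredCube x (hr k).le
  have hlocal (k : ℕ) :
      ∫⁻ y in centeredCube x (2 ^ k * t), edist (f y) (⨍ z in centeredCube x (2 ^ 0 * t), f z) ≤
        (1 + k * 2 ^ n) * A * volume (centeredCube x (2 ^ k * t)) :=
    setLIntegral_edist_setAverage_zero_le hf (monotone_centeredCube_two_pow_mul x ht.le)
      (fun k => by rw [hvol]; exact (ENNReal.ofReal_pos.2 (by positivity)).ne')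
      (fun k => by rw [hvol]; exact ENNReal.ofReal_ne_top)
      (fun k => by rw [pow_succ', mul_assoc, volume_centeredCube_two_mul x (hr k).le])
      (fun k => hA _ (hr k)) k
  have hkernel (k : ℕ) (y : EuclideanSpace ℝ (Fin n))
      (hy : y ∈ disjointed (fun k : ℕ => centeredCube x (2 ^ k * t)) k) :
      ENNReal.ofReal (poissonHK n t (x - y)) ≤
        ENNReal.ofReal (poissonConst n * t / (2 ^ k * t / 2) ^ (n + 1)) :=
    ENNReal.ofReal_le_ofReal (poissonHK_le ht.le (half_pos (hr k))
      (half_two_pow_mul_sq_le_of_mem_disjointed ht.le hy))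
  calc ∫⁻ y, edist (f y) (⨍ z in centeredCube x t, f z) ∂halfSpaceHarmonicMeasure x t
      = ∫⁻ y, ENNReal.ofReal (poissonHK n t (x - y)) *
          edist (f y) (⨍ z in centeredCube x (2 ^ 0 * t), f z) := by
        rw [lintegral_halfSpaceHarmonicMeasure, pow_zero, one_mul]
    _ ≤ ∑' k : ℕ, ENNReal.ofReal (poissonConst n * t / (2 ^ k * t / 2) ^ (n + 1)) *
          ∫⁻ y in centeredCube x (2 ^ k * t),
            edist (f y) (⨍ z in centeredCube x (2 ^ 0 * t), f z) :=
        lintegral_mul_le_tsum_setLIntegral (fun k => measurableSet_cube _ _)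
          (iUnion_centeredCube_two_pow_mul x ht) (fun k => ENNReal.ofReal_ne_top) hkernel
    _ ≤ ∑' k : ℕ, ENNReal.ofReal (poissonConst n * t / (2 ^ k * t / 2) ^ (n + 1)) *
          ((1 + k * 2 ^ n) * A * volume (centeredCube x (2 ^ k * t))) := by
        gcongr with k
        exact hlocal k
    _ = ENNReal.ofReal (poissonOscConst n) * A := tsum_kernelBound_mul_volume_centeredCube x ht A

theorem poisson_oscillation_bound_general (hf : AEStronglyMeasurable f) (ht : 0 < t)
    (hA : ∀ r > 0, ∫⁻ y in centeredCube x r, edist (f y) (⨍ z in centeredCube x r, f z) ≤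
      A * volume (centeredCube x r)) :
    ∫⁻ y, edist (f y) (∫ z, f z ∂halfSpaceHarmonicMeasure x t) ∂halfSpaceHarmonicMeasure x t ≤
      ENNReal.ofReal (2 * poissonOscConst n) * A := by
  have := isProbabilityMeasure_halfSpaceHarmonicMeasure x ht
  calc ∫⁻ y, edist (f y) (∫ z, f z ∂halfSpaceHarmonicMeasure x t) ∂halfSpaceHarmonicMeasure x t
      ≤ 2 * ∫⁻ y, edist (f y) (⨍ z in centeredCube x t, f z) ∂halfSpaceHarmonicMeasure x t :=
        lintegral_edist_integral_le
          (hf.mono_ac (halfSpaceHarmonicMeasure_absolutelyContinuous x t)) _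
    _ ≤ 2 * (ENNReal.ofReal (poissonOscConst n) * A) := by
        gcongr
        exact lintegral_edist_setAverage_halfSpaceHarmonicMeasure_le hf ht hA
    _ = ENNReal.ofReal (2 * poissonOscConst n) * A := by
        rw [ENNReal.ofReal_mul zero_le_two, ENNReal.ofReal_ofNat, mul_assoc]

end PoissonOscillation

/-- For `φ ∈ BMO(ℝⁿ)` and its Poisson extension `φ(x,t)`, there is a constant `C(n)` with
`∫ |φ(y) - φ(x,t)| P_t(x-y) dy ≤ C(n) ‖φ‖_*` for all `x` and `t > 0`. -/
theorem poisson_oscillation_bound (n : ℕ) :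
    ∃ C > (0 : ℝ), ∀ (φ : EuclideanSpace ℝ (Fin n) → ℝ) (A : ℝ)
      (x : EuclideanSpace ℝ (Fin n)) (t : ℝ),
      LocallyIntegrable φ → (∀ c l, 0 < l → cubeOsc φ c l ≤ A) → 0 < t →
      ∫⁻ y, ENNReal.ofReal (|φ y - poissonExt φ x t| * poissonHK n t (x - y)) ≤
        ENNReal.ofReal (C * A) := by
  have hC : 0 < 2 * poissonOscConst n := mul_pos two_pos (poissonOscConst_pos n)
  refine ⟨2 * poissonOscConst n, hC, fun φ A x t hφ hA ht => ?_⟩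
  rw [← lintegral_edist_integral_halfSpaceHarmonicMeasure φ x ht.le, ENNReal.ofReal_mul hC.le]
  exact poisson_oscillation_bound_general hφ.aestronglyMeasurable ht fun r hr =>
    setLIntegral_edist_setAverage_cube_le hφ (by positivity) (hA _ _ (by positivity))
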